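/- Let k ≥ 2 and let t be a natural number such that every weighted graph with a terminal set of size k admits a mimicking network with at most t vertices. Then t(t−1)/2 ≥ 2^{k−1}−1; in particular t ≥ 2^{(k−1)/2}. -/

import Mathlib

open scoped Classical

/-- A weighted graph with a distinguished embedded set of terminals indexed by `κ`:
a finite vertex type `V`, an embedding `ι : κ ↪ V` of the terminals, and a symmetric
nonnegative capacity function `c` on pairs of vertices. -/
structure WeightedGraph (κ : Type) where
  V : Type
  [fintypeV : Fintype V]
  ι : κ ↪ V
  c : V → V → ℝ
  symm : ∀ u v, c u v = c v u
  nonneg : ∀ u v, 0 ≤ c u v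

namespace WeightedGraph

variable {κ : Type}

instance (G : WeightedGraph κ) : Fintype G.V := G.fintypeV

/-- The cut function `h_G(A) = Σ_{u ∈ A, v ∉ A} c(u,v)`. -/
noncomputable def cutval (G : WeightedGraph κ) (A : Finset G.V) : ℝ :=
  ∑ u ∈ A, ∑ v ∈ Aᶜ, G.c u v

/-- The vertex sets realizing the terminal partition `(U, K \ U)`. -/
noncomputable def cutSets (G : WeightedGraph κ) (U : Finset κ) : Finset (Finset G.V) :=
  Finset.univ.filter fun A => ∀ x : κ, G.ι x ∈ A ↔ x ∈ U

theorem cutSets_nonempty (G : WeightedGraph κ) (U : Finset κ) : (G.cutSets U).Nonempty := by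
  refine ⟨U.image G.ι, ?_⟩
  simp [cutSets, Finset.mem_image, G.ι.injective.eq_iff]

/-- The terminal cut function `h_K^G(U) = min { h_G(A) : A ∩ K = U }`. -/
noncomputable def termCut (G : WeightedGraph κ) (U : Finset κ) : ℝ :=
  (G.cutSets U).inf' (G.cutSets_nonempty U) G.cutval

/-- `H` is a mimicking network for `(G, K)`: all minimum terminal cut values agree. -/
def IsMimicking (G H : WeightedGraph κ) : Prop :=
  ∀ U : Finset κ, H.termCut U = G.termCut U

/-- `H` is a quotient (contraction) of `G` along the surjection `f`: terminals map to
terminals, and capacities between distinct classes are sums of the original capacities. -/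
def IsQuotient (G H : WeightedGraph κ) (f : G.V → H.V) : Prop :=
  Function.Surjective f ∧ (∀ x : κ, f (G.ι x) = H.ι x) ∧
    ∀ y z : H.V, y ≠ z →
      H.c y z = ∑ u ∈ Finset.univ.filter (fun u => f u = y),
        ∑ v ∈ Finset.univ.filter (fun v => f v = z), G.c u v

end WeightedGraph

/-!
A terminal cut function of a network with `n` vertices is, on any family of terminal sets, a
combination of the `n.choose 2` zero-one vectors recording which of the chosen minimum cuts separate
a given pair of vertices. There are only finitely many zero-one vectors, so only finitely many
proper subspaces are spanned by them. A star whose leaves are the terminals has terminal cut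
function `U ↦ min (w(U), w(Uᶜ))`, and gluing stars along their leaves adds these functions.
The stars' cut functions span the `2 ^ (k - 1) - 1`-dimensional space of functions on the proper
bipartitions of the terminals, so a generic nonnegative combination of them avoids all those
proper subspaces, and a network mimicking it needs `2 ^ (k - 1) - 1` pairs of vertices.
-/

section LinearAlgebra

theorem exists_nonneg_forall_sum_smul_notMem {K E J T : Type*} [Field K] [LinearOrder K]
    [IsStrictOrderedRing K] [AddCommGroup E] [Module K E] [Fintype J] [Finite T] {f : J → E}
    (hf : Submodule.span K (Set.range f) = ⊤) (P : T → Submodule K E) (hP : ∀ i, P i ≠ ⊤) :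
    ∃ a : J → K, 0 ≤ a ∧ ∀ i, ∑ j, a j • f j ∉ P i := by
  have := Fintype.ofFinite T
  choose φ hφ_ne_zero hφ_le_ker using
    fun i => Submodule.exists_le_ker_of_lt_top (P i) (lt_top_iff_ne_top.mpr (hP i))
  let p (i : T) : MvPolynomial J K := ∑ j, MvPolynomial.C (φ i (f j)) * MvPolynomial.X j
  have eval_p (i : T) (a : J → K) : MvPolynomial.eval a (p i) = φ i (∑ j, a j • f j) := by
    simp [p, mul_comm]
  have p_ne_zero (i : T) : p i ≠ 0 := by
    intro hp
    refine hφ_ne_zero i (LinearMap.ext_on_range hf fun j => ?_)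
    simpa [hp] using (eval_p i (Pi.single j 1)).symm
  obtain ⟨a, ha, hpa⟩ : ∃ a : J → K, 0 ≤ a ∧ MvPolynomial.eval a (∏ i, p i) ≠ 0 := by
    by_contra! h
    suffices ∏ i, p i = 0 from Finset.prod_ne_zero_iff.mpr (fun i _ => p_ne_zero i) this
    refine MvPolynomial.funext_set (fun _ => Set.Ici 0) (fun _ => Set.Ici_infinite 0) fun a ha => ?_
    rw [map_zero]
    exact h a fun j => ha j trivial
  refine ⟨a, ha, fun i hi => hpa ?_⟩
  rw [map_prod]
  exact Finset.prod_eq_zero (Finset.mem_univ i) ((eval_p i a).trans (hφ_le_ker i hi))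

theorem span_range_indicator_Ici_eq_top (R : Type*) {I : Type*} [Ring R] [Finite I]
    [PartialOrder I] :
    Submodule.span R (Set.range fun a : I => (Set.Ici a).indicator (1 : I → R)) = ⊤ := by
  have := Fintype.ofFinite I
  have indicator_Ici (a : I) : (Set.Ici a).indicator (1 : I → R) =
      Pi.single a 1 + ∑ b with a < b, Pi.single b 1 := by
    ext x
    obtain rfl | hne := eq_or_ne a x
    · simp
    · simp [Set.indicator_apply, Pi.single_apply, hne.symm, hne.le_iff_lt]
  rw [eq_top_iff, ← (Pi.basisFun R I).span_eq, Submodule.span_le]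
  rintro _ ⟨a, rfl⟩
  rw [Pi.basisFun_apply, SetLike.mem_coe]
  induction a using WellFoundedGT.induction with
  | ind a ih =>
    rw [← sub_eq_of_eq_add (indicator_Ici a)]
    refine sub_mem (Submodule.subset_span ⟨a, rfl⟩) (sum_mem fun b hb => ih b ?_)
    exact (Finset.mem_filter.mp hb).2

/-- The space spanned by the zero-one vectors that are the indicators of the members of `𝒮`. -/
noncomputable def indicatorSpan {I : Type*} (𝒮 : Finset (Set I)) : Submodule ℝ (I → ℝ) :=
  Submodule.span ℝ (Set.range fun s : 𝒮 => s.1.indicator 1)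

theorem card_le_of_indicatorSpan_eq_top {I : Type*} [Fintype I] {𝒮 : Finset (Set I)}
    (h : indicatorSpan 𝒮 = ⊤) : Fintype.card I ≤ 𝒮.card := by
  calc Fintype.card I = Module.finrank ℝ (indicatorSpan 𝒮) := by
        rw [h, finrank_top, Module.finrank_fintype_fun_eq_card]
    _ ≤ Fintype.card 𝒮 := finrank_range_le_card _
    _ = 𝒮.card := Fintype.card_coe 𝒮

end LinearAlgebra

theorem compl_disjSum {α β : Type*} [Fintype α] [Fintype β] [DecidableEq α] [DecidableEq β]
    [DecidableEq (α ⊕ β)] (s : Finset α) (t : Finset β) : (s.disjSum t)ᶜ = sᶜ.disjSum tᶜ := by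
  ext (x | x) <;> simp

namespace WeightedGraph

section Separation

variable {κ : Type} {I V : Type*}

/-- The indices `i` for which the pair `e` has an endpoint on either side of the cut `A i`. -/
def separating (A : I → Finset V) (e : Sym2 V) : Set I :=
  {i | (∃ u ∈ e, u ∈ A i) ∧ ∃ v ∈ e, v ∉ A i}

theorem mem_separating_mk {A : I → Finset V} {u v : V} {i : I} :
    i ∈ separating A s(u, v) ↔ ¬(u ∈ A i ↔ v ∈ A i) := by
  simp only [separating, Set.mem_ofPred_eq, Sym2.mem_iff, exists_eq_or_imp, exists_eq_left]
  tauto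

theorem cutval_compl (G : WeightedGraph κ) (A : Finset G.V) : G.cutval Aᶜ = G.cutval A := by
  rw [cutval, cutval, compl_compl, Finset.sum_comm]
  simp only [G.symm]

theorem two_mul_cutval (G : WeightedGraph κ) (A : Finset G.V) :
    2 * G.cutval A = ∑ u, ∑ v, if u ∈ A ↔ v ∈ A then 0 else G.c u v := by
  have cutval_eq (B : Finset G.V) : G.cutval B = ∑ u ∈ B, ∑ v, if v ∈ B then 0 else G.c u v := by
    simp only [cutval, Finset.sum_ite, Finset.sum_const_zero, zero_add, Finset.compl_eq_univ_sdiff,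
      Finset.filter_notMem_eq_sdiff]
  calc 2 * G.cutval A = G.cutval A + G.cutval Aᶜ := by rw [cutval_compl, two_mul]
    _ = ∑ u ∈ A, (∑ v, if u ∈ A ↔ v ∈ A then 0 else G.c u v) +
        ∑ u ∈ Aᶜ, ∑ v, if u ∈ A ↔ v ∈ A then 0 else G.c u v := by
      rw [cutval_eq, cutval_eq]
      congr 1 <;> refine Finset.sum_congr rfl fun u hu => ?_
      · simp only [hu, true_iff]
      · simp only [Finset.mem_compl.mp hu, false_iff, Finset.mem_compl]
    _ = ∑ u, ∑ v, if u ∈ A ↔ v ∈ A then 0 else G.c u v := Finset.sum_add_sum_compl A _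

theorem cutval_eq_sum_smul_indicator (G : WeightedGraph κ) (A : I → Finset G.V) :
    (fun i => G.cutval (A i)) =
      ∑ u, ∑ v, (G.c u v / 2) • (separating A s(u, v)).indicator (1 : I → ℝ) := by
  ext i
  rw [← mul_div_cancel_left₀ (G.cutval (A i)) two_ne_zero, two_mul_cutval, Finset.sum_div]
  simp only [Finset.sum_apply, Pi.smul_apply, smul_eq_mul, Finset.sum_div, Set.indicator_apply,
    mem_separating_mk, Pi.one_apply, ite_not, mul_ite, mul_zero, mul_one, ite_div, zero_div]

theorem exists_termCut_mem_indicatorSpan (G : WeightedGraph κ) (U : I → Finset κ) :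
    ∃ 𝒮 : Finset (Set I), 𝒮.card ≤ (Fintype.card G.V).choose 2 ∧
      (fun i => G.termCut (U i)) ∈ indicatorSpan 𝒮 := by
  choose A _ hA using fun i => Finset.exists_mem_eq_inf' (G.cutSets_nonempty (U i)) G.cutval
  refine ⟨({e | ¬e.IsDiag} : Finset (Sym2 G.V)).image (separating A), ?_, ?_⟩
  · refine Finset.card_image_le.trans_eq ?_
    rw [← Fintype.card_subtype, Sym2.card_subtype_not_diag]
  · simp only [termCut, hA, cutval_eq_sum_smul_indicator]
    refine sum_mem fun u _ => sum_mem fun v _ => Submodule.smul_mem _ _ ?_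
    obtain rfl | huv := eq_or_ne u v
    · have separating_diag : separating A s(u, u) = ∅ := by ext i; simp [mem_separating_mk]
      rw [separating_diag, Set.indicator_empty']
      exact zero_mem _
    · refine Submodule.subset_span ⟨⟨_, Finset.mem_image_of_mem _ ?_⟩, rfl⟩
      simpa using huv

end Separation

theorem mem_cutSets {κ : Type} {G : WeightedGraph κ} {U : Finset κ} {A : Finset G.V} :
    A ∈ G.cutSets U ↔ ∀ x, G.ι x ∈ A ↔ x ∈ U :=
  Finset.mem_filter_univ _

section Star

variable {κ J : Type} [Fintype κ]

/-- The terminal cut function of a star with centre outside the terminals and an edge of capacity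
`w x` to each terminal `x`; see `starGraph_termCut`. -/
noncomputable def starCut (w : κ → ℝ) (U : Finset κ) : ℝ :=
  min (∑ x ∈ U, w x) (∑ x ∈ Uᶜ, w x)

theorem starCut_smul {a : ℝ} (ha : 0 ≤ a) (w : κ → ℝ) (U : Finset κ) :
    starCut (a • w) U = a * starCut w U := by
  simp only [starCut, Pi.smul_apply, smul_eq_mul, ← Finset.mul_sum, mul_min_of_nonneg _ _ ha]

variable [Fintype J] (W : J → κ → ℝ) (hW : ∀ j, 0 ≤ W j)

/-- The union of the stars with centres `j : J` and capacities `W j`, glued along the terminals. -/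
def starGraph : WeightedGraph κ where
  V := κ ⊕ J
  ι := ⟨Sum.inl, Sum.inl_injective⟩
  c
    | .inl x, .inr j => W j x
    | .inr j, .inl x => W j x
    | _, _ => 0
  symm := by rintro (x | j) (y | i) <;> rfl
  nonneg := by rintro (x | j) (y | i) <;> first | exact hW _ _ | exact le_rfl

theorem starGraph_cutval_disjSum (U : Finset κ) (B : Finset J) :
    (starGraph W hW).cutval (U.disjSum B) =
      ∑ j ∈ B, ∑ x ∈ Uᶜ, W j x + ∑ j ∈ Bᶜ, ∑ x ∈ U, W j x := by
  let A : Finset (starGraph W hW).V := U.disjSum B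
  -- `cutval` complements with the classical instance, not with that of the sum type.
  have compl_eq : Aᶜ = Uᶜ.disjSum Bᶜ := @compl_disjSum _ _ _ _ _ _ (Classical.decEq _) U B
  calc (starGraph W hW).cutval A = ∑ u ∈ A, ∑ v ∈ Uᶜ.disjSum Bᶜ, (starGraph W hW).c u v := by
        rw [cutval, compl_eq]
        rfl
    _ = ∑ x ∈ U, ∑ j ∈ Bᶜ, W j x + ∑ j ∈ B, ∑ x ∈ Uᶜ, W j x := by
        simp [A, Finset.sum_disjSum, starGraph]
    _ = ∑ j ∈ B, ∑ x ∈ Uᶜ, W j x + ∑ j ∈ Bᶜ, ∑ x ∈ U, W j x := by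
        rw [Finset.sum_comm, add_comm]

theorem mem_cutSets_starGraph {U : Finset κ} {A : Finset (starGraph W hW).V} :
    A ∈ (starGraph W hW).cutSets U ↔ ∃ B, A = U.disjSum B := by
  rw [mem_cutSets]
  constructor
  · intro hA
    have toLeft_eq : A.toLeft = U := by
      ext x
      exact Finset.mem_toLeft.trans (hA x)
    exact ⟨A.toRight, toLeft_eq ▸ Finset.toLeft_disjSum_toRight.symm⟩
  · rintro ⟨B, rfl⟩ x
    exact Finset.inl_mem_disjSum

theorem starGraph_termCut (U : Finset κ) :
    (starGraph W hW).termCut U = ∑ j, starCut (W j) U := by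
  apply le_antisymm
  · let B : Finset J := {j | ∑ x ∈ Uᶜ, W j x ≤ ∑ x ∈ U, W j x}
    calc (starGraph W hW).termCut U ≤ (starGraph W hW).cutval (U.disjSum B) :=
          Finset.inf'_le _ ((mem_cutSets_starGraph W hW).mpr ⟨B, rfl⟩)
      _ = ∑ j ∈ B, starCut (W j) U + ∑ j ∈ Bᶜ, starCut (W j) U := by
        rw [starGraph_cutval_disjSum]
        congr 1 <;> refine Finset.sum_congr rfl fun j hj => ?_
        · exact (min_eq_right (by simpa [B] using hj)).symm
        · exact (min_eq_left (le_of_lt (by simpa [B] using hj))).symm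
      _ = ∑ j, starCut (W j) U := Finset.sum_add_sum_compl B _
  · refine Finset.le_inf' _ _ fun A hA => ?_
    obtain ⟨B, rfl⟩ := (mem_cutSets_starGraph W hW).mp hA
    rw [starGraph_cutval_disjSum, ← Finset.sum_add_sum_compl B]
    gcongr
    · exact min_le_right _ _
    · exact min_le_left _ _

end Star

theorem exists_forall_isMimicking_card_le_choose_two {κ J : Type} {I : Type*} [Fintype κ]
    [Finite J] [Fintype I] {W : J → κ → ℝ} (hW : ∀ j, 0 ≤ W j) {U : I → Finset κ}
    (hspan : Submodule.span ℝ (Set.range fun j i => starCut (W j) (U i)) = ⊤) :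
    ∃ G : WeightedGraph κ, ∀ H : WeightedGraph κ, G.IsMimicking H →
      Fintype.card I ≤ (Fintype.card H.V).choose 2 := by
  have := Fintype.ofFinite J
  obtain ⟨a, ha, hgeneric⟩ := exists_nonneg_forall_sum_smul_notMem hspan
    (fun 𝒮 : {𝒮 : Finset (Set I) // indicatorSpan 𝒮 ≠ ⊤} => indicatorSpan 𝒮.1) Subtype.property
  refine ⟨starGraph (fun j => a j • W j) fun j => smul_nonneg (ha j) (hW j), fun H hH => ?_⟩
  obtain ⟨𝒮, hcard, hmem⟩ := H.exists_termCut_mem_indicatorSpan U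
  have termCut_eq : (fun i => H.termCut (U i)) = ∑ j, a j • fun i => starCut (W j) (U i) := by
    ext i
    simp [hH (U i), starGraph_termCut, starCut_smul (ha _)]
  rw [termCut_eq] at hmem
  have htop : indicatorSpan 𝒮 = ⊤ := by
    by_contra hne
    exact hgeneric ⟨𝒮, hne⟩ hmem
  exact (card_le_of_indicatorSpan_eq_top htop).trans hcard

section Probe

variable {κ : Type}

/-- The bipartitions of the terminals into two nonempty sides, each represented by its side not
containing the base point `x₀`. -/
abbrev ProperSide (x₀ : κ) : Type := {U : Finset κ // U.Nonempty ∧ x₀ ∉ U}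

theorem card_properSide [Fintype κ] (x₀ : κ) :
    Fintype.card (ProperSide x₀) = 2 ^ (Fintype.card κ - 1) - 1 := by
  have properSides_eq : ({U | U.Nonempty ∧ x₀ ∉ U} : Finset (Finset κ)) =
      (Finset.univ.erase x₀).powerset.erase ∅ := by
    ext U
    simp [Finset.nonempty_iff_ne_empty, Finset.subset_erase]
  rw [Fintype.card_subtype, properSides_eq, Finset.card_erase_of_mem (Finset.empty_mem_powerset _),
    Finset.card_powerset, Finset.card_erase_of_mem (Finset.mem_univ _), Finset.card_univ]

/-- Star capacities: one on each terminal of `S`, and an additional `b` on the base point. Lowering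
`b` from `#S` to `#S - 1` changes the terminal cut function exactly on the supersets of `S`. -/
noncomputable def probe (x₀ : κ) (S : Finset κ) (b : ℝ) : κ → ℝ :=
  fun x => (if x = x₀ then b else 0) + if x ∈ S then 1 else 0

theorem probe_nonneg (x₀ : κ) (S : Finset κ) {b : ℝ} (hb : 0 ≤ b) : 0 ≤ probe x₀ S b := by
  intro x
  change 0 ≤ (if x = x₀ then b else 0) + if x ∈ S then 1 else 0
  positivity

theorem starCut_probe [Fintype κ] {x₀ : κ} (S : Finset κ) (b : ℝ) {U : Finset κ} (hU : x₀ ∉ U) :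
    starCut (probe x₀ S b) U = min ((S ∩ U).card : ℝ) (b + (S \ U).card) := by
  have sdiff_eq : S \ U = Uᶜ ∩ S := by rw [Finset.sdiff_eq_inter_compl, Finset.inter_comm]
  simp [starCut, probe, Finset.sum_add_distrib, hU, Finset.inter_comm, sdiff_eq]

theorem starCut_probe_sub_starCut_probe [Fintype κ] {x₀ : κ} (S : Finset κ) {U : Finset κ}
    (hU : x₀ ∉ U) :
    starCut (probe x₀ S S.card) U - starCut (probe x₀ S (S.card - 1)) U =
      if S ⊆ U then 1 else 0 := by
  have hcard : ((S ∩ U).card : ℝ) + (S \ U).card = S.card := by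
    exact_mod_cast Finset.card_inter_add_card_sdiff S U
  rw [starCut_probe S _ hU, starCut_probe S _ hU, ← hcard]
  split_ifs with hSU
  · simp [Finset.sdiff_eq_empty_iff_subset.mpr hSU]
  · have : (1 : ℝ) ≤ (S \ U).card := by
      exact_mod_cast Finset.card_pos.mpr (Finset.sdiff_nonempty.mpr hSU)
    rw [min_eq_left (by linarith), min_eq_left (by linarith), sub_self]

/-- The two probes of each proper side `S`, with `#S` and `#S - 1` on the base point. -/
noncomputable def probePair (x₀ : κ) (j : ProperSide x₀ × Fin 2) : κ → ℝ :=
  probe x₀ j.1 ((j.1.1.card : ℝ) - (j.2 : ℕ))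

theorem probePair_nonneg (x₀ : κ) (j : ProperSide x₀ × Fin 2) : 0 ≤ probePair x₀ j := by
  have one_le_card : (1 : ℝ) ≤ j.1.1.card := by exact_mod_cast j.1.2.1.card_pos
  have le_one : ((j.2 : ℕ) : ℝ) ≤ 1 := by exact_mod_cast Nat.lt_succ_iff.mp j.2.isLt
  exact probe_nonneg _ _ (by linarith)

theorem span_range_starCut_probePair_eq_top [Fintype κ] (x₀ : κ) :
    Submodule.span ℝ (Set.range fun (j : ProperSide x₀ × Fin 2) (U : ProperSide x₀) =>
      starCut (probePair x₀ j) U) = ⊤ := by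
  rw [eq_top_iff, ← span_range_indicator_Ici_eq_top ℝ, Submodule.span_le]
  rintro _ ⟨S, rfl⟩
  have indicator_eq : (Set.Ici S).indicator (1 : ProperSide x₀ → ℝ) =
      (fun U => starCut (probePair x₀ (S, 0)) U.1) -
        fun U => starCut (probePair x₀ (S, 1)) U.1 := by
    ext U
    simpa [Set.indicator_apply, probePair] using (starCut_probe_sub_starCut_probe S.1 U.2.2).symm
  simp only [SetLike.mem_coe, indicator_eq]
  exact sub_mem (Submodule.subset_span ⟨(S, 0), rfl⟩) (Submodule.subset_span ⟨(S, 1), rfl⟩)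

end Probe

end WeightedGraph

theorem two_rpow_half_le_of_two_pow_sub_one_le {m n : ℕ} (hn : 0 < n)
    (h : 2 ^ m - 1 ≤ n * (n - 1) / 2) : (2 : ℝ) ^ ((m : ℝ) / 2) ≤ n := by
  have two_pow_le : 2 ^ m ≤ n ^ 2 := by
    obtain ⟨l, rfl⟩ := Nat.exists_eq_succ_of_ne_zero hn.ne'
    have : (l + 1) * (l + 1 - 1) / 2 ≤ (l + 1) * l := Nat.div_le_self _ _
    grind
  refine le_of_sq_le_sq ?_ n.cast_nonneg
  calc ((2 : ℝ) ^ ((m : ℝ) / 2)) ^ 2 = 2 ^ m := by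
        rw [← Real.rpow_mul_natCast zero_le_two, Nat.cast_ofNat, div_mul_cancel₀ _ two_ne_zero,
          Real.rpow_natCast]
    _ ≤ (n : ℝ) ^ 2 := by exact_mod_cast two_pow_le

theorem mimicking_size_lower_bound_general (κ : Type) [Fintype κ] [Nonempty κ] :
    ∃ G : WeightedGraph κ, ∀ H : WeightedGraph κ, G.IsMimicking H →
      2 ^ (Fintype.card κ - 1) - 1 ≤ Fintype.card H.V * (Fintype.card H.V - 1) / 2 ∧
        (2 : ℝ) ^ (((Fintype.card κ : ℝ) - 1) / 2) ≤ Fintype.card H.V := by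
  obtain ⟨x₀⟩ := ‹Nonempty κ›
  obtain ⟨G, hG⟩ := WeightedGraph.exists_forall_isMimicking_card_le_choose_two
    (WeightedGraph.probePair_nonneg x₀) (WeightedGraph.span_range_starCut_probePair_eq_top x₀)
  refine ⟨G, fun H hH => ?_⟩
  have hpairs : 2 ^ (Fintype.card κ - 1) - 1 ≤
      Fintype.card H.V * (Fintype.card H.V - 1) / 2 := by
    rw [← WeightedGraph.card_properSide x₀, ← Nat.choose_two_right]
    exact hG H hH
  have hpos : 0 < Fintype.card H.V := Fintype.card_pos_iff.mpr ⟨H.ι x₀⟩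
  have hexp : ((Fintype.card κ - 1 : ℕ) : ℝ) = Fintype.card κ - 1 :=
    Nat.cast_pred (Fintype.card_pos_iff.mpr ⟨x₀⟩)
  exact ⟨hpairs, hexp ▸ two_rpow_half_le_of_two_pow_sub_one_le hpos hpairs⟩

/-- if every weighted graph with `k` terminals (`k ≥ 2`) admits a
mimicking network with at most `t` vertices, then `t(t-1)/2 ≥ 2^(k-1) - 1`; in
particular `t ≥ 2^((k-1)/2)`. -/
theorem mimicking_size_lower_bound (k t : ℕ) (hk : 2 ≤ k)
    (h : ∀ G : WeightedGraph (Fin k), ∃ H : WeightedGraph (Fin k),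
      WeightedGraph.IsMimicking G H ∧ Fintype.card H.V ≤ t) :
    2 ^ (k - 1) - 1 ≤ t * (t - 1) / 2 ∧
      (2 : ℝ) ^ (((k : ℝ) - 1) / 2) ≤ (t : ℝ) := by
  have : NeZero k := ⟨by omega⟩
  obtain ⟨G, hG⟩ := mimicking_size_lower_bound_general (Fin k)
  obtain ⟨H, hH, hcard⟩ := h G
  rw [Fintype.card_fin] at hG
  exact (hG H hH).imp (fun h => h.trans (by gcongr)) (fun h => h.trans (by exact_mod_cast hcard))
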